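/- Let G be a graph with independence number α = α(G), M a perfect matching of G, and C an M-alternating cycle. Let P ⊆ C be a blue M-alternating path of length at least 6·R(R(4,α+1), α+1), starting with a non-matching edge and not containing any 0-skip. Then there exist two edges e1 = (b1,b2) and e2 = (w1,w2) of G with all four endpoints on P, at least one of e1, e2 being red, such that C' = e1 ∪ e2 ∪ C[b1,w1] ∪ C[b2,w2] is an M-alternating cycle with 0 < w_M(C') ≤ 2 whose number of red edges equals w_M(C'). Symmetrically, if P ⊆ C is a red M-alternating path of length at least 6·R(R(4,α+1), α+1), starting with a non-matching edge and not containing any 0-skip, then there exist such edges e1, e2, at least one of them blue, with C' an M-alternating cycle satisfying −2 ≤ w_M(C') < 0 whose number of blue edges equals |w_M(C')|. -/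

import Mathlib

open Finset

/-- `M` is (the edge set of) a perfect matching of `G`: all its edges are edges of `G` and
every vertex belongs to exactly one edge of `M`. -/
def IsPM {V : Type*} [DecidableEq V] (G : SimpleGraph V) (M : Finset (Sym2 V)) : Prop :=
  ↑M ⊆ G.edgeSet ∧ ∀ v : V, ∃! e, e ∈ M ∧ v ∈ e

/-- Number of red edges in the edge set `F` (the coloring `red` marks the red edges). -/
def redCount {V : Type*} [DecidableEq V] (red : Sym2 V → Bool) (F : Finset (Sym2 V)) : ℕ :=
  (F.filter fun e => red e = true).card

/-- Number of blue edges in the edge set `F`. -/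
def blueCount {V : Type*} [DecidableEq V] (red : Sym2 V → Bool) (F : Finset (Sym2 V)) : ℕ :=
  (F.filter fun e => red e = false).card

/-- The weight `w_M(e)`: 0 for blue edges, +1 for red non-matching edges, −1 for red
matching edges. -/
def wt {V : Type*} [DecidableEq V] (red : Sym2 V → Bool) (M : Finset (Sym2 V))
    (e : Sym2 V) : ℤ :=
  if red e then (if e ∈ M then -1 else 1) else 0

/-- `w_M(F)`, the total weight of an edge set `F`. -/
def wSum {V : Type*} [DecidableEq V] (red : Sym2 V → Bool) (M F : Finset (Sym2 V)) : ℤ :=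
  ∑ e ∈ F, wt red M e

/-- A list of edges alternates with respect to the matching `M`: consecutive edges are
alternately in and out of `M`. -/
def altList {V : Type*} [DecidableEq V] (M : Finset (Sym2 V)) (l : List (Sym2 V)) : Prop :=
  l.Chain' fun e f => ¬((e ∈ M) ↔ (f ∈ M))

/-- `C` is (the edge set of) an `M`-alternating cycle in `G`: it is traced by a cycle walk
whose edges alternate (cyclically) between `M` and non-`M` edges. -/
def IsAltCycle {V : Type*} [DecidableEq V] (G : SimpleGraph V)
    (M C : Finset (Sym2 V)) : Prop :=
  ∃ (v : V) (p : G.Walk v v), p.IsCycle ∧ p.edges.toFinset = C ∧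
    altList M (p.edges ++ p.edges.take 1)

/-- `P` is (the edge set of) an `M`-alternating path in `G`. -/
def IsAltPath {V : Type*} [DecidableEq V] (G : SimpleGraph V)
    (M P : Finset (Sym2 V)) : Prop :=
  ∃ (u v : V) (p : G.Walk u v), p.IsPath ∧ p.edges.toFinset = P ∧ altList M p.edges

/-- The symmetric difference of two edge sets. -/
def sd {V : Type*} [DecidableEq V] (M M' : Finset (Sym2 V)) : Finset (Sym2 V) :=
  (M \ M') ∪ (M' \ M)

/-- The set of vertices covered by an edge set. -/
def edgeVerts {V : Type*} (F : Finset (Sym2 V)) : Set V := {v | ∃ e ∈ F, v ∈ e}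

/-- `𝒞` is a set of pairwise vertex-disjoint `M`-alternating cycles of `G`. -/
def IsAltCycleSet {V : Type*} [DecidableEq V] (G : SimpleGraph V) (M : Finset (Sym2 V))
    (𝒞 : Finset (Finset (Sym2 V))) : Prop :=
  (∀ C ∈ 𝒞, IsAltCycle G M C) ∧
    (𝒞 : Set (Finset (Sym2 V))).Pairwise fun C C' => Disjoint (edgeVerts C) (edgeVerts C')

/-- A skip on the `M`-alternating cycle `C` (with respect to the coloring `red`):
two non-matching chords `e1 ≠ e2` of `C`, not edges of `C`, such that replacing two
stretches of `C` by them yields a strictly shorter `M`-alternating cycle `C'` whose weight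
differs from that of `C` by at most 4 in absolute value. -/
structure Skip {V : Type*} [DecidableEq V] (G : SimpleGraph V) (red : Sym2 V → Bool)
    (M C : Finset (Sym2 V)) where
  e1 : Sym2 V
  e2 : Sym2 V
  C' : Finset (Sym2 V)
  hne : e1 ≠ e2
  he1G : e1 ∈ G.edgeSet
  he2G : e2 ∈ G.edgeSet
  he1M : e1 ∉ M
  he2M : e2 ∉ M
  he1C : e1 ∉ C
  he2C : e2 ∉ C
  halt : IsAltCycle G M C'
  hmem1 : e1 ∈ C'
  hmem2 : e2 ∈ C'
  hsub : C' \ {e1, e2} ⊆ C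
  hsmall : C'.card < C.card
  hwbound : |wSum red M C' - wSum red M C| ≤ 4

/-- The weight `w(S) = w_M(C') − w_M(C)` of a skip. -/
def Skip.w {V : Type*} [DecidableEq V] {G : SimpleGraph V} {red : Sym2 V → Bool}
    {M C : Finset (Sym2 V)} (S : Skip G red M C) : ℤ :=
  wSum red M S.C' - wSum red M C

/-- The skip `S` is contained in the path `P` along `C`: the stretch of `C` removed by
the skip lies on `P`. -/
def Skip.In {V : Type*} [DecidableEq V] {G : SimpleGraph V} {red : Sym2 V → Bool}
    {M C : Finset (Sym2 V)} (S : Skip G red M C) (P : Finset (Sym2 V)) : Prop :=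
  C \ S.C' ⊆ P

/-- Two skips on `C` are disjoint: they are contained in disjoint paths along `C`. -/
def Skip.Disj {V : Type*} [DecidableEq V] {G : SimpleGraph V} {red : Sym2 V → Bool}
    {M C : Finset (Sym2 V)} (S1 S2 : Skip G red M C) : Prop :=
  ∃ P1 P2 : Finset (Sym2 V), P1 ⊆ C ∧ P2 ⊆ C ∧ Disjoint P1 P2 ∧
    IsAltPath G M P1 ∧ IsAltPath G M P2 ∧ S1.In P1 ∧ S2.In P2

/-- A skip living on one of the cycles of the family `𝒞`. -/
structure SkipOn {V : Type*} [DecidableEq V] (G : SimpleGraph V) (red : Sym2 V → Bool)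
    (M : Finset (Sym2 V)) (𝒞 : Finset (Finset (Sym2 V))) where
  C : Finset (Sym2 V)
  hC : C ∈ 𝒞
  S : Skip G red M C

/-- Two skips on cycles of `𝒞` are disjoint: either they live on different
(vertex-disjoint) cycles, or they are disjoint skips on the same cycle. -/
def SkipOn.Disj {V : Type*} [DecidableEq V] {G : SimpleGraph V} {red : Sym2 V → Bool}
    {M : Finset (Sym2 V)} {𝒞 : Finset (Finset (Sym2 V))}
    (T1 T2 : SkipOn G red M 𝒞) : Prop :=
  T1.C ≠ T2.C ∨ ∃ h : T1.C = T2.C, Skip.Disj (h ▸ T1.S) T2.S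

/-- `𝒞` contains a 0-skip set: a nonempty collection of pairwise disjoint skips on cycles
of `𝒞` of total weight 0. -/
def HasZeroSkipSet {V : Type*} [DecidableEq V] (G : SimpleGraph V) (red : Sym2 V → Bool)
    (M : Finset (Sym2 V)) (𝒞 : Finset (Finset (Sym2 V))) : Prop :=
  ∃ L : List (SkipOn G red M 𝒞), L ≠ [] ∧ L.Pairwise SkipOn.Disj ∧
    (L.map fun T => T.S.w).sum = 0

/-- `𝒞` contains a 0-skip-cycle set: a nonempty collection of pairwise disjoint skips on
cycles of `𝒞` and/or whole cycles `D ⊆ 𝒞` (the skips living on cycles not in `D`), such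
that the total weight of the skips minus the total weight of the cycles is 0. -/
def HasZeroSkipCycleSet {V : Type*} [DecidableEq V] (G : SimpleGraph V)
    (red : Sym2 V → Bool) (M : Finset (Sym2 V)) (𝒞 : Finset (Finset (Sym2 V))) : Prop :=
  ∃ (L : List (SkipOn G red M 𝒞)) (D : Finset (Finset (Sym2 V))),
    D ⊆ 𝒞 ∧ (L ≠ [] ∨ D.Nonempty) ∧ L.Pairwise SkipOn.Disj ∧ (∀ T ∈ L, T.C ∉ D) ∧
      (L.map fun T => T.S.w).sum - (∑ C ∈ D, wSum red M C) = 0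

/-- The independence number `α(G)`: the maximum size of a set of pairwise non-adjacent
vertices. -/
noncomputable def indepNum {V : Type*} (G : SimpleGraph V) : ℕ :=
  sSup {n | ∃ s : Finset V, s.card = n ∧ (s : Set V).Pairwise fun u v => ¬ G.Adj u v}

/-- `RamseyProp N s t`: every graph on `N` vertices contains a clique of size `s` or an
independent set of size `t`. -/
def RamseyProp (N s t : ℕ) : Prop :=
  ∀ H : SimpleGraph (Fin N),
    (∃ A : Finset (Fin N), A.card = s ∧ (A : Set (Fin N)).Pairwise H.Adj) ∨
    (∃ B : Finset (Fin N), B.card = t ∧ (B : Set (Fin N)).Pairwise fun u v => ¬ H.Adj u v)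

/-- The Ramsey number `R(s,t)`: the smallest `N` such that every graph on `N` vertices
contains a clique of size `s` or an independent set of size `t`. -/
noncomputable def ramsey (s t : ℕ) : ℕ := sInf {N | RamseyProp N s t}

/-! Ramsey's theorem, applied first to the left and then to the right ends of the matching edges on
the path, yields four of these edges `bᵢwᵢ` whose left ends form a clique and whose right ends form
a clique. If a chord `bᵢbⱼ` or `wᵢwⱼ` does not have the colour of the path, then these two chords
close up with the two matching edges to an alternating 4-cycle with the required weight. Otherwise
all chords have the colour of the path, and for `i < j < k` the stretch of the path from `wᵢ` to
`bₖ` can be replaced by the detour `wᵢ, wⱼ, bⱼ, bₖ`. The weight of a monochromatic alternating path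
of odd length starting off `M` depends only on its colour, so this is a 0-skip. The fourth edge
allows `k` to be chosen so that the detour is strictly shorter than the stretch it replaces. -/

section Ramsey

theorem exists_isNClique_or_isNIndepSet_of_choose_le {α : Type*} (H : SimpleGraph α) {s t : ℕ}
    {S : Finset α} (hS : (s + t).choose s ≤ S.card) :
    (∃ A ⊆ S, H.IsNClique s A) ∨ ∃ B ⊆ S, H.IsNIndepSet t B := by
  classical
  induction s generalizing t S with
  | zero => exact .inl ⟨∅, by simp, by simp⟩
  | succ s ihs =>
    induction t generalizing S with
    | zero => exact .inr ⟨∅, by simp, by simp [SimpleGraph.isNIndepSet_iff]⟩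
    | succ t iht =>
      have pascal : (s + 1 + (t + 1)).choose (s + 1) =
          (s + (t + 1)).choose s + (s + 1 + t).choose (s + 1) := by
        rw [show s + 1 + (t + 1) = s + t + 1 + 1 by omega, Nat.choose_succ_succ]
        congr 2; omega
      have hpos : 0 < (s + (t + 1)).choose s := Nat.choose_pos (by omega)
      obtain ⟨x, hx⟩ : S.Nonempty := card_pos.mp (by omega)
      set N := (S.erase x).filter (H.Adj x)
      set N' := (S.erase x).filter (¬ H.Adj x ·)
      have hcard : N.card + N'.card + 1 = S.card := by
        rw [card_filter_add_card_filter_not, card_erase_add_one hx]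
      have hN : N ⊆ S := (filter_subset _ _).trans (erase_subset _ _)
      have hN' : N' ⊆ S := (filter_subset _ _).trans (erase_subset _ _)
      obtain hle | hle :
          (s + (t + 1)).choose s ≤ N.card ∨ (s + 1 + t).choose (s + 1) ≤ N'.card := by
        omega
      · obtain ⟨A, hA, hclique⟩ | ⟨B, hB, hindep⟩ := ihs hle
        · exact .inl ⟨insert x A, insert_subset hx (hA.trans hN),
            hclique.insert fun b hb => (mem_filter.mp (hA hb)).2⟩
        · exact .inr ⟨B, hB.trans hN, hindep⟩
      · obtain ⟨A, hA, hclique⟩ | ⟨B, hB, hindep⟩ := iht hle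
        · exact .inl ⟨A, hA.trans hN', hclique⟩
        · rw [← SimpleGraph.isNClique_compl] at hindep
          refine .inr ⟨insert x B, insert_subset hx (hB.trans hN'), ?_⟩
          rw [← SimpleGraph.isNClique_compl]
          refine hindep.insert fun b hb => ?_
          obtain ⟨hbS, hxb⟩ := mem_filter.mp (hB hb)
          exact (H.compl_adj x b).mpr ⟨(ne_of_mem_erase hbS).symm, hxb⟩

theorem ramseyProp_ramsey (s t : ℕ) : RamseyProp (ramsey s t) s t := by
  refine Nat.sInf_mem (s := {N | RamseyProp N s t}) ⟨(s + t).choose s, fun H => ?_⟩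
  obtain ⟨A, -, hA⟩ | ⟨B, -, hB⟩ :=
    exists_isNClique_or_isNIndepSet_of_choose_le H (S := univ) (Finset.card_fin _).ge
  · exact .inl ⟨A, hA.card_eq, hA.isClique⟩
  · exact .inr ⟨B, hB.card_eq, hB.isIndepSet⟩

variable {V : Type*} {G : SimpleGraph V}

theorem exists_orderEmbedding_pairwise_adj {t : ℕ} (hG : G.IndepSetFree t) (s : ℕ)
    (f : Fin (ramsey s t) ↪ V) :
    ∃ φ : Fin s ↪o Fin (ramsey s t), Pairwise fun i j => G.Adj (f (φ i)) (f (φ j)) := by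
  obtain ⟨A, hA, hclique⟩ | ⟨B, hB, hindep⟩ := ramseyProp_ramsey s t (G.comap f)
  · exact ⟨A.orderEmbOfFin hA, fun i j hij => hclique (A.orderEmbOfFin_mem hA i)
      (A.orderEmbOfFin_mem hA j) ((A.orderEmbOfFin hA).injective.ne hij)⟩
  · refine absurd ⟨?_, by rw [card_map, hB]⟩ (hG (B.map f))
    rw [coe_map, SimpleGraph.isIndepSet_iff]
    exact (f.injective.injOn.pairwise_image).mpr hindep

theorem exists_orderEmbedding_pairwise_adj₂ {t : ℕ} (hG : G.IndepSetFree t) (s : ℕ)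
    (f g : Fin (ramsey (ramsey s t) t) ↪ V) :
    ∃ φ : Fin s ↪o Fin (ramsey (ramsey s t) t),
      Pairwise fun i j => G.Adj (f (φ i)) (f (φ j)) ∧ G.Adj (g (φ i)) (g (φ j)) := by
  obtain ⟨φ, hφ⟩ := exists_orderEmbedding_pairwise_adj hG (ramsey s t) f
  obtain ⟨ψ, hψ⟩ := exists_orderEmbedding_pairwise_adj hG s (φ.toEmbedding.trans g)
  exact ⟨ψ.trans φ, fun i j hij => ⟨hφ (ψ.injective.ne hij), hψ hij⟩⟩

theorem indepSetFree_indepNum_add_one [Finite V] : G.IndepSetFree (indepNum G + 1) := by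
  intro s hs
  have hle : s.card ≤ indepNum G := by
    have := Fintype.ofFinite V
    refine le_csSup ⟨Fintype.card V, ?_⟩ ⟨s, rfl, hs.isIndepSet⟩
    rintro _ ⟨t, rfl, -⟩
    exact card_le_univ t
  exact absurd hs.card_eq (by omega)

end Ramsey

section Alternation

variable {V : Type*} {M : Finset (Sym2 V)} {l l' : List (Sym2 V)}

/-- The edges of `l` lying in `M` are exactly those in odd positions, counted from `0`: the list
alternates with respect to `M` and begins with a nonmatching edge. -/
def MatchedAtOdd (M : Finset (Sym2 V)) (l : List (Sym2 V)) : Prop :=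
  ∀ i (hi : i < l.length), l[i] ∈ M ↔ Odd i

theorem matchedAtOdd_append :
    MatchedAtOdd M (l ++ l') ↔
      MatchedAtOdd M l ∧ ∀ i (hi : i < l'.length), l'[i] ∈ M ↔ Odd (l.length + i) := by
  refine ⟨fun h => ⟨fun i hi => ?_, fun i hi => ?_⟩, fun ⟨h, h'⟩ i hi => ?_⟩
  · have hli := h i (by rw [List.length_append]; omega)
    rwa [List.getElem_append_left hi] at hli
  · have hli := h (l.length + i) (by simpa using hi)
    simpa [List.getElem_append_right] using hli
  · rw [List.getElem_append]
    split_ifs with hil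
    · exact h i hil
    · simpa only [Nat.add_sub_cancel' (not_lt.mp hil)] using
        h' (i - l.length) (by rw [List.length_append] at hi; omega)

theorem MatchedAtOdd.replace_left {r : List (Sym2 V)} (h : MatchedAtOdd M (l ++ r))
    (h' : MatchedAtOdd M l') (hl : Odd l.length) (hl' : Odd l'.length) :
    MatchedAtOdd M (l' ++ r) := by
  refine matchedAtOdd_append.mpr ⟨h', fun i hi => ?_⟩
  rw [(matchedAtOdd_append.mp h).2 i hi, Nat.odd_add, Nat.odd_add, iff_true_left hl,
    iff_true_left hl']

theorem matchedAtOdd_append_singleton {e : Sym2 V} :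
    MatchedAtOdd M (l ++ [e]) ↔ MatchedAtOdd M l ∧ (e ∈ M ↔ Odd l.length) := by
  simp [matchedAtOdd_append]

theorem MatchedAtOdd.take_drop (h : MatchedAtOdd M l) {x : ℕ} (hx : Even x) (n : ℕ) :
    MatchedAtOdd M ((l.drop x).take n) := by
  intro i hi
  simp only [List.length_take, List.length_drop, lt_inf_iff] at hi
  simp only [List.getElem_take, List.getElem_drop, h (x + i) (by omega), Nat.odd_add', hx, iff_true]

variable [DecidableEq V]

theorem altList_iff_isChain : altList M l ↔ l.IsChain fun e f => ¬(e ∈ M ↔ f ∈ M) := Iff.rfl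

theorem matchedAtOdd_iff_altList :
    MatchedAtOdd M l ↔ altList M l ∧ ∀ e, l.head? = some e → e ∉ M := by
  rw [altList_iff_isChain, List.isChain_iff_getElem]
  simp only [List.head?_eq_getElem?, List.getElem?_eq_some_iff, forall_exists_index]
  constructor
  · intro h
    refine ⟨fun i hi => ?_, ?_⟩
    · rw [h i (by omega), h (i + 1) hi, Nat.odd_add_one]; tauto
    · rintro _ h0 rfl
      simp [h 0 h0]
  · rintro ⟨hchain, hhead⟩ i
    induction i with
    | zero => intro h0; simpa using hhead _ h0 rfl
    | succ i ih =>
      intro hi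
      have hstep := hchain i hi
      rw [ih (by omega)] at hstep
      rw [Nat.odd_add_one]; tauto

theorem matchedAtOdd_and_even_iff_altList (hl : l ≠ []) :
    MatchedAtOdd M l ∧ Even l.length ↔
      altList M (l ++ l.take 1) ∧ ∀ e, l.head? = some e → e ∉ M := by
  obtain ⟨e, l, rfl⟩ := List.exists_cons_of_ne_nil hl
  have hiff := matchedAtOdd_iff_altList (M := M) (l := (e :: l) ++ [e])
  have hhead : MatchedAtOdd M (e :: l) → e ∉ M := fun h =>
    (matchedAtOdd_iff_altList.mp h).2 e rfl
  rw [matchedAtOdd_append_singleton, ← Nat.not_even_iff_odd] at hiff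
  simp only [List.take_succ_cons, List.take_zero, List.head?_cons, List.cons_append,
    Option.some.injEq, forall_eq'] at hiff ⊢
  tauto

theorem altList_append_take_one_iff_chain :
    altList M (l ++ l.take 1) ↔
      Cycle.Chain (fun e f => ¬(e ∈ M ↔ f ∈ M)) (l : Cycle (Sym2 V)) := by
  cases l with
  | nil => simp [altList_iff_isChain]
  | cons e l => simp [altList_iff_isChain, Cycle.chain_coe_cons]

theorem altList_append_take_one_reverse (h : altList M (l ++ l.take 1)) :
    altList M (l.reverse ++ l.reverse.take 1) := by
  cases l with
  | nil => exact h
  | cons e l =>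
    rw [altList_append_take_one_iff_chain, List.reverse_cons, ← Cycle.coe_cons_eq_coe_append,
      Cycle.chain_coe_cons]
    have hrev := List.isChain_reverse.mpr (List.IsChain.imp (fun _ _ => mt Iff.symm) h)
    simpa using hrev

theorem MatchedAtOdd.sum_wt {red : Sym2 V → Bool} {col : Bool} (h : MatchedAtOdd M l)
    (hcol : ∀ e ∈ l, red e = col) :
    (l.map (wt red M)).sum = if col = true ∧ Odd l.length then 1 else 0 := by
  induction l using List.reverseRecOn with
  | nil => simp
  | append_singleton l e ih =>
    rw [matchedAtOdd_append_singleton] at h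
    have he : red e = col := hcol e (by simp)
    rw [List.map_append, List.sum_append, ih h.1 fun f hf => hcol f (by simp [hf])]
    cases col <;> by_cases hodd : Odd l.length <;> simp [wt, he, h.2, hodd, Nat.odd_add_one]

theorem wSum_toFinset (red : Sym2 V → Bool) (M : Finset (Sym2 V)) (hl : l.Nodup) :
    wSum red M l.toFinset = (l.map (wt red M)).sum :=
  List.sum_toFinset _ hl

end Alternation

section Cycle

variable {V : Type*} {G : SimpleGraph V} {u v w : V}

theorem eq_or_eq_of_mem_edges {c : G.Walk u u} (hc : c.IsCycle) {t : ℕ} (ht : t ≠ 0)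
    (htc : t < c.length) (hw : s(c.getVert t, w) ∈ c.edges) :
    w = c.getVert (t - 1) ∨ w = c.getVert (t + 1) := by
  rw [← SimpleGraph.Walk.adj_toSubgraph_iff_mem_edges, ← SimpleGraph.Subgraph.mem_neighborSet,
    hc.neighborSet_toSubgraph_internal ht htc] at hw
  simpa using hw

theorem exists_eq_append_of_edges_subset {c : G.Walk u u} (hc : c.IsCycle) {p : G.Walk u v}
    (hp : p.IsPath) (hpc : p.edges ⊆ c.edges) (hsnd : p.snd = c.snd) : ∃ r, c = p.append r := by
  induction p using SimpleGraph.Walk.concatRec with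
  | Hnil => exact ⟨c, rfl⟩
  | @Hconcat u v w p h ih =>
    rw [SimpleGraph.Walk.edges_concat] at hpc
    rw [SimpleGraph.Walk.concat_isPath_iff] at hp
    rw [SimpleGraph.Walk.concat_eq_append] at hsnd ⊢
    cases p with
    | nil =>
      cases c with
      | nil => exact absurd rfl hc.ne_nil
      | cons h' r =>
        obtain rfl : w = _ := by simpa using hsnd
        exact ⟨r, rfl⟩
    | @cons _ x _ hux p =>
      set q := SimpleGraph.Walk.cons hux p with hq
      obtain ⟨r, rfl⟩ := ih hc hp.1 (fun e he => hpc (by simp [he])) (by simpa [hq] using hsnd)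
      cases r with
      | nil => exact absurd hp.1 (by simp [hq, SimpleGraph.Walk.isPath_iff_nil])
      | @cons _ y _ hvy r =>
        have hlen : q.length < (q.append (.cons hvy r)).length := by simp
        have hvert : (q.append (.cons hvy r)).getVert q.length = v := by
          simp [SimpleGraph.Walk.getVert_append]
        obtain hw | hw : w = _ ∨ w = _ :=
          eq_or_eq_of_mem_edges hc (t := q.length) (by simp [hq]) hlen
            (by rw [hvert]; exact hpc (by simp))
        · rw [SimpleGraph.Walk.getVert_append, if_pos (by simp [hq])] at hw
          exact absurd (q.getVert_mem_support _) (hw ▸ hp.2)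
        · obtain rfl : w = y := by simpa [SimpleGraph.Walk.getVert_append] using hw
          exact ⟨r, q.append_assoc (.cons h .nil) r⟩

theorem isCycle_append_of_support_subset {q q' : G.Walk u v} {r : G.Walk v u}
    (hc : (q.append r).IsCycle) (hq : ¬ q.Nil) (hq' : q'.IsPath) (hlen : 1 < q'.length)
    (hsub : q'.support ⊆ q.support) : (q'.append r).IsCycle := by
  refine hq'.isCycle_append (hc.isPath_of_append_right hq) (fun x hx hxr => ?_) (.inl hlen)
  have hdisj := hc.support_nodup
  rw [SimpleGraph.Walk.tail_support_append, List.nodup_append'] at hdisj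
  have hxu : x ≠ u := by
    rintro rfl
    have hnodup := hq'.support_nodup
    rw [← SimpleGraph.Walk.cons_tail_support, List.nodup_cons] at hnodup
    exact hnodup.1 hx
  have hxq := hsub (List.mem_of_mem_tail hx)
  rw [SimpleGraph.Walk.mem_support_iff] at hxq
  exact hdisj.2.2 (hxq.resolve_left hxu) hxr

theorem exists_walk_between {p : G.Walk u v} (hp : p.IsPath) {i j : ℕ} (hij : i ≤ j)
    (hj : j ≤ p.length) :
    ∃ q : G.Walk (p.getVert i) (p.getVert j), q.IsPath ∧ q.length = j - i ∧
      q.edges = (p.edges.drop i).take (j - i) ∧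
      ∀ t ≤ j - i, q.getVert t = p.getVert (i + t) := by
  refine ⟨((p.drop i).take (j - i)).copy rfl ?_, ?_, ?_, ?_, ?_⟩
  · rw [SimpleGraph.Walk.drop_getVert, Nat.add_sub_cancel' hij]
  · simpa using (hp.drop i).take _
  · simpa only [SimpleGraph.Walk.length_copy, SimpleGraph.Walk.take_length,
      SimpleGraph.Walk.drop_length] using min_eq_left (Nat.sub_le_sub_right hj i)
  · simp [SimpleGraph.Walk.edges_take, SimpleGraph.Walk.edges_drop]
  · intro t ht
    simp [ht]

theorem MatchedAtOdd.getVert_mem_iff {M : Finset (Sym2 V)} {p : G.Walk u v}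
    (hM : MatchedAtOdd M p.edges) {i : ℕ} (hi : i < p.length) :
    s(p.getVert i, p.getVert (i + 1)) ∈ M ↔ Odd i := by
  rw [← p.getElem_edges (by simpa using hi)]
  exact hM i _

end Cycle

section AltCycle

variable {V : Type*} [DecidableEq V] {G : SimpleGraph V} {M C : Finset (Sym2 V)} {u v w : V}

theorem IsAltCycle.exists_isCycle_snd_eq (hC : IsAltCycle G M C) (hw : s(u, w) ∈ C) :
    ∃ c : G.Walk u u, c.IsCycle ∧ c.edges.toFinset = C ∧
      altList M (c.edges ++ c.edges.take 1) ∧ c.snd = w := by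
  obtain ⟨x, c₀, hc₀, rfl, halt⟩ := hC
  rw [List.mem_toFinset] at hw
  have hu := c₀.fst_mem_support_of_mem_edges hw
  have hrot := c₀.rotate_edges u hu
  rw [altList_append_take_one_iff_chain, ← Cycle.coe_eq_coe.mpr hrot,
    ← altList_append_take_one_iff_chain] at halt
  have hE : (c₀.rotate u hu).edges.toFinset = c₀.edges.toFinset :=
    List.toFinset_eq_of_perm _ _ hrot.perm
  rw [← hrot.mem_iff] at hw
  rw [← SimpleGraph.Walk.adj_toSubgraph_iff_mem_edges, ← SimpleGraph.Subgraph.mem_neighborSet,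
    (hc₀.rotate hu).neighborSet_toSubgraph_endpoint] at hw
  obtain rfl | rfl := hw
  · exact ⟨_, hc₀.rotate hu, hE, halt, rfl⟩
  · refine ⟨(c₀.rotate u hu).reverse, (hc₀.rotate hu).reverse, ?_, ?_,
      SimpleGraph.Walk.snd_reverse _⟩
    · rw [SimpleGraph.Walk.edges_reverse, List.toFinset_reverse, hE]
    · rw [SimpleGraph.Walk.edges_reverse]
      exact altList_append_take_one_reverse halt

theorem IsAltCycle.exists_isCycle_append (hC : IsAltCycle G M C) {q : G.Walk u v} (hq : q.IsPath)
    (hnil : ¬ q.Nil) (hqC : q.edges.toFinset ⊆ C) :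
    ∃ r, (q.append r).IsCycle ∧ (q.append r).edges.toFinset = C ∧
      altList M ((q.append r).edges ++ (q.append r).edges.take 1) := by
  obtain ⟨c, hc, hE, halt, hsnd⟩ := hC.exists_isCycle_snd_eq
    (hqC (List.mem_toFinset.mpr (q.mk_start_snd_mem_edges hnil)))
  rw [← hE] at hqC
  obtain ⟨r, rfl⟩ := exists_eq_append_of_edges_subset hc hq
    (fun e he => List.mem_toFinset.mp (hqC (List.mem_toFinset.mpr he))) hsnd.symm
  exact ⟨r, hc, hE, halt⟩

theorem isAltCycle_toFinset_edges {c : G.Walk u u} (hc : c.IsCycle) (h : MatchedAtOdd M c.edges)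
    (heven : Even c.length) : IsAltCycle G M c.edges.toFinset :=
  have hne : c.edges ≠ [] := mt SimpleGraph.Walk.edges_eq_nil.mp hc.not_nil
  ⟨u, c, hc, rfl, ((matchedAtOdd_and_even_iff_altList hne).mp ⟨h, by rwa [c.length_edges]⟩).1⟩

theorem IsAltCycle.eq_pred_or_eq_succ (hC : IsAltCycle G M C) {q : G.Walk u v} (hq : q.IsPath)
    (hqC : q.edges.toFinset ⊆ C) {i j : ℕ} (hi : i ≠ 0) (hiq : i < q.length) (hj : j ≤ q.length)
    (hmem : s(q.getVert i, q.getVert j) ∈ C) : j = i - 1 ∨ j = i + 1 := by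
  have hnil : ¬ q.Nil := SimpleGraph.Walk.not_nil_iff_lt_length.mpr (by omega)
  obtain ⟨r, hc, rfl, -⟩ := hC.exists_isCycle_append hq hnil hqC
  have hvert (t : ℕ) (ht : t ≤ q.length) : (q.append r).getVert t = q.getVert t := by
    rw [SimpleGraph.Walk.getVert_append]
    split_ifs with htq
    · rfl
    · simp [show t = q.length by omega]
  rw [List.mem_toFinset, ← hvert i hiq.le] at hmem
  have hadj := eq_or_eq_of_mem_edges hc hi (by rw [SimpleGraph.Walk.length_append]; omega) hmem
  rw [hvert _ (by omega), hvert _ (by omega)] at hadj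
  exact hadj.imp (hq.getVert_injOn hj (show i - 1 ≤ _ by omega)) (hq.getVert_injOn hj hiq)

end AltCycle

section ZeroSkip

variable {V : Type*} {G : SimpleGraph V} {M C : Finset (Sym2 V)}
  {red : Sym2 V → Bool} {col : Bool} {u v : V}

/-- `q` is an `M`-alternating path of odd length whose end edges are nonmatching and all of whose
edges have colour `col`. -/
structure IsOddMonoPath (red : Sym2 V → Bool) (M : Finset (Sym2 V)) (col : Bool)
    (q : G.Walk u v) : Prop where
  isPath : q.IsPath
  matchedAtOdd : MatchedAtOdd M q.edges
  odd_length : Odd q.length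
  red_eq : ∀ e ∈ q.edges, red e = col

theorem IsOddMonoPath.exists_detour {q : G.Walk u v} (hq : IsOddMonoPath red M col q) {k : ℕ}
    (hk : Odd k) (hkq : k < q.length)
    (h₁ : G.Adj u (q.getVert (k + 1))) (h₂ : G.Adj (q.getVert k) v)
    (h₁M : s(u, q.getVert (k + 1)) ∉ M) (h₂M : s(q.getVert k, v) ∉ M)
    (h₁col : red s(u, q.getVert (k + 1)) = col) (h₂col : red s(q.getVert k, v) = col) :
    ∃ q' : G.Walk u v, IsOddMonoPath red M col q' ∧ q'.support ⊆ q.support ∧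
      q'.edges = [s(u, q.getVert (k + 1)), s(q.getVert k, q.getVert (k + 1)),
        s(q.getVert k, v)] := by
  classical
  have hkE : s(q.getVert k, q.getVert (k + 1)) ∈ q.edges :=
    q.mk_mem_edges_iff_exists.mpr ⟨k, hkq, rfl⟩
  have hkM : s(q.getVert k, q.getVert (k + 1)) ∈ M :=
    (hq.matchedAtOdd.getVert_mem_iff hkq).mpr hk
  let q' : G.Walk u v := .cons h₁ (.cons (q.adj_getVert_succ hkq).symm (.cons h₂ .nil))
  have hedges : q'.edges = [s(u, q.getVert (k + 1)), s(q.getVert k, q.getVert (k + 1)),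
      s(q.getVert k, v)] := by simp [q', Sym2.eq_swap]
  have hsupp : q'.support = [0, k + 1, k, q.length].map q.getVert := by simp [q']
  have hkq' : k + 1 ≠ q.length := fun h => Nat.not_odd_iff_even.mpr hk.add_one (h ▸ hq.odd_length)
  have hnodup : [0, k + 1, k, q.length].Nodup := by
    have := hk.pos
    grind
  refine ⟨q', ⟨?_, ?_, ⟨1, rfl⟩, ?_⟩, ?_, hedges⟩
  · refine .mk' (hsupp ▸ List.Nodup.map_on (fun i hi j hj => ?_) hnodup)
    simp only [List.mem_cons, List.not_mem_nil, or_false] at hi hj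
    exact hq.isPath.getVert_injOn (show i ≤ _ by omega) (show j ≤ _ by omega)
  · rw [hedges, matchedAtOdd_iff_altList, altList_iff_isChain]
    simp [h₁M, h₂M, hkM]
  · simp [hedges, h₁col, h₂col, hq.red_eq _ hkE]
  · simp [hsupp]

variable [DecidableEq V]

theorem IsOddMonoPath.sum_wt_eq {q q' : G.Walk u v} (hq : IsOddMonoPath red M col q)
    (hq' : IsOddMonoPath red M col q') :
    (q.edges.map (wt red M)).sum = (q'.edges.map (wt red M)).sum := by
  rw [hq.matchedAtOdd.sum_wt hq.red_eq, hq'.matchedAtOdd.sum_wt hq'.red_eq]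
  simp only [SimpleGraph.Walk.length_edges, hq.odd_length, hq'.odd_length]

theorem IsAltCycle.exists_matchedAtOdd_append (hC : IsAltCycle G M C) {q : G.Walk u v}
    (hq : q.IsPath) (hnil : ¬ q.Nil) (hqC : q.edges.toFinset ⊆ C) (hqM : MatchedAtOdd M q.edges) :
    ∃ r, (q.append r).IsCycle ∧ (q.append r).edges.toFinset = C ∧
      MatchedAtOdd M (q.append r).edges ∧ Even (q.append r).length := by
  obtain ⟨r, hc, hE, halt⟩ := hC.exists_isCycle_append hq hnil hqC
  have hhead : ∀ e, (q.append r).edges.head? = some e → e ∉ M := by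
    rw [SimpleGraph.Walk.edges_append, List.head?_append_of_ne_nil _ (by simpa using hnil)]
    exact (matchedAtOdd_iff_altList.mp hqM).2
  refine ⟨r, hc, hE, ?_⟩
  rw [← SimpleGraph.Walk.length_edges]
  exact (matchedAtOdd_and_even_iff_altList (mt SimpleGraph.Walk.edges_eq_nil.mp hc.not_nil)).mpr
    ⟨halt, hhead⟩

theorem exists_zeroSkip_of_detour (hC : IsAltCycle G M C) {q q' : G.Walk u v}
    (hq : IsOddMonoPath red M col q) (hqC : q.edges.toFinset ⊆ C)
    (hq' : IsOddMonoPath red M col q') (hsub : q'.support ⊆ q.support)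
    (hone : 1 < q'.length) (hlt : q'.length < q.length) {e₁ e₂ : Sym2 V} (hne : e₁ ≠ e₂)
    (he₁ : e₁ ∈ q'.edges) (he₂ : e₂ ∈ q'.edges) (he₁M : e₁ ∉ M) (he₂M : e₂ ∉ M)
    (he₁C : e₁ ∉ C) (he₂C : e₂ ∉ C) (hother : ∀ e ∈ q'.edges, e = e₁ ∨ e = e₂ ∨ e ∈ C) :
    ∃ S : Skip G red M C, S.w = 0 ∧ S.In q.edges.toFinset := by
  have hnil : ¬ q.Nil := SimpleGraph.Walk.not_nil_iff_lt_length.mpr (by omega)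
  obtain ⟨r, hc, rfl, hM, heven⟩ :=
    hC.exists_matchedAtOdd_append hq.isPath hnil hqC hq.matchedAtOdd
  have hc' : (q'.append r).IsCycle := isCycle_append_of_support_subset hc hnil hq'.isPath hone hsub
  have hM' : MatchedAtOdd M (q'.append r).edges := by
    rw [SimpleGraph.Walk.edges_append] at hM ⊢
    exact hM.replace_left hq'.matchedAtOdd (by simpa using hq.odd_length)
      (by simpa using hq'.odd_length)
  have heven' : Even (q'.append r).length := by
    rw [SimpleGraph.Walk.length_append, Nat.even_add, ← Nat.not_odd_iff_even] at heven ⊢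
    simpa only [hq.odd_length, hq'.odd_length] using heven
  have hw : wSum red M (q'.append r).edges.toFinset = wSum red M (q.append r).edges.toFinset := by
    rw [wSum_toFinset red M hc'.edges_nodup, wSum_toFinset red M hc.edges_nodup]
    simp only [SimpleGraph.Walk.edges_append, List.map_append, List.sum_append, hq.sum_wt_eq hq']
  let S : Skip G red M (q.append r).edges.toFinset :=
    { e1 := e₁, e2 := e₂, C' := (q'.append r).edges.toFinset, hne
      he1G := q'.edges_subset_edgeSet he₁, he2G := q'.edges_subset_edgeSet he₂
      he1M := he₁M, he2M := he₂M, he1C := he₁C, he2C := he₂C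
      halt := isAltCycle_toFinset_edges hc' hM' heven'
      hmem1 := by simp [he₁], hmem2 := by simp [he₂]
      hsub := fun e he => by
        simp only [SimpleGraph.Walk.edges_append, List.toFinset_append, mem_sdiff, mem_union,
          List.mem_toFinset, mem_insert, mem_singleton] at he hother ⊢
        have := hother e
        tauto
      hsmall := by
        rw [List.toFinset_card_of_nodup hc'.edges_nodup, List.toFinset_card_of_nodup hc.edges_nodup]
        simpa using hlt
      hwbound := by rw [hw]; simp }
  refine ⟨S, sub_eq_zero.mpr hw, fun e he => ?_⟩
  simp only [S, SimpleGraph.Walk.edges_append, List.toFinset_append, mem_sdiff, mem_union] at he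
  tauto

theorem exists_zeroSkip_of_chords (hC : IsAltCycle G M C) {q : G.Walk u v}
    (hq : IsOddMonoPath red M col q) (hqC : q.edges.toFinset ⊆ C) (hlen : 3 < q.length) {k : ℕ}
    (hk : Odd k) (hkq : k + 1 < q.length)
    (h₁ : G.Adj u (q.getVert (k + 1))) (h₂ : G.Adj (q.getVert k) v)
    (h₁M : s(u, q.getVert (k + 1)) ∉ M) (h₂M : s(q.getVert k, v) ∉ M)
    (h₁col : red s(u, q.getVert (k + 1)) = col) (h₂col : red s(q.getVert k, v) = col) :
    ∃ S : Skip G red M C, S.w = 0 ∧ S.In q.edges.toFinset := by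
  obtain ⟨q', hq', hsub, hedges⟩ := hq.exists_detour hk (by omega) h₁ h₂ h₁M h₂M h₁col h₂col
  have hlen' : q'.length = 3 := by rw [← q'.length_edges, hedges]; rfl
  have hne : s(u, q.getVert (k + 1)) ≠ s(q.getVert k, v) := by
    have hnodup := hq'.isPath.isTrail.edges_nodup
    rw [hedges] at hnodup
    simp_all
  have h₁C : s(u, q.getVert (k + 1)) ∉ C := fun h => by
    have := hC.eq_pred_or_eq_succ hq.isPath hqC (i := k + 1) (j := 0) (by omega) hkq (by omega)
      (by rwa [q.getVert_zero, Sym2.eq_swap])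
    have := hk.pos
    omega
  have h₂C : s(q.getVert k, v) ∉ C := fun h => by
    have := hC.eq_pred_or_eq_succ hq.isPath hqC (i := k) (j := q.length) hk.pos.ne' (by omega)
      le_rfl (by rwa [q.getVert_length])
    omega
  have hkC : s(q.getVert k, q.getVert (k + 1)) ∈ C :=
    hqC (List.mem_toFinset.mpr (q.mk_mem_edges_iff_exists.mpr ⟨k, by omega, rfl⟩))
  exact exists_zeroSkip_of_detour hC hq hqC hq' hsub (by omega) (by omega) hne (by simp [hedges])
    (by simp [hedges]) h₁M h₂M h₁C h₂C (by simp [hedges, hkC])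

end ZeroSkip

section AltSquare

variable {V : Type*} {G : SimpleGraph V} {M : Finset (Sym2 V)} {red : Sym2 V → Bool}
  {a b a' b' : V}

/-- No two edges of `M` share a vertex, i.e. `M` is a matching. -/
def IsMatchingEdgeSet (M : Finset (Sym2 V)) : Prop :=
  ∀ ⦃a b c : V⦄, s(a, b) ∈ M → s(a, c) ∈ M → b = c

theorem IsPM.isMatchingEdgeSet [DecidableEq V] (hM : IsPM G M) : IsMatchingEdgeSet M :=
  fun a _ _ hb hc => Sym2.congr_right.mp <|
    (hM.2 a).unique ⟨hb, Sym2.mem_mk_left _ _⟩ ⟨hc, Sym2.mem_mk_left _ _⟩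

/-- The edges `ab` and `a'b'` belong to `M`, and the chords `aa'` and `bb'` close them up to an
`M`-alternating 4-cycle. -/
structure IsAltSquare (G : SimpleGraph V) (M : Finset (Sym2 V)) (a b a' b' : V) : Prop where
  adj : G.Adj a b
  adj' : G.Adj a' b'
  adj_left : G.Adj a a'
  adj_right : G.Adj b b'
  ne : a ≠ b'
  ne' : b ≠ a'
  mem : s(a, b) ∈ M
  mem' : s(a', b') ∈ M
  left_notMem : s(a, a') ∉ M
  right_notMem : s(b, b') ∉ M

theorem IsAltSquare.nodup (h : IsAltSquare G M a b a' b') : [a', b', b, a].Nodup := by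
  simp [h.adj'.ne, h.ne'.symm, h.adj_left.ne', h.adj_right.ne', h.ne.symm, h.adj.ne']

theorem IsAltSquare.edges_nodup (h : IsAltSquare G M a b a' b') :
    [s(a, a'), s(a', b'), s(b, b'), s(a, b)].Nodup := by
  have hnodup := h.nodup
  grind

variable [DecidableEq V]

/-- The edge set of the 4-cycle `a a' b' b`. -/
def squareEdges (a b a' b' : V) : Finset (Sym2 V) :=
  [s(a, a'), s(a', b'), s(b, b'), s(a, b)].toFinset

namespace IsAltSquare

theorem isAltCycle (h : IsAltSquare G M a b a' b') : IsAltCycle G M (squareEdges a b a' b') := by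
  let c : G.Walk a a :=
    .cons h.adj_left (.cons h.adj' (.cons h.adj_right.symm (.cons h.adj.symm .nil)))
  have hedges : c.edges = [s(a, a'), s(a', b'), s(b, b'), s(a, b)] := by simp [c, Sym2.eq_swap]
  have hpath : c.tail.IsPath := .mk' (by simpa [c] using h.nodup)
  have hc : c.IsCycle :=
    SimpleGraph.Walk.isCycle_iff_isPath_tail_and_le_length.mpr ⟨hpath, by simp [c]⟩
  have hM : MatchedAtOdd M c.edges := by
    rw [hedges, matchedAtOdd_iff_altList, altList_iff_isChain]
    simp [h.mem, h.mem', h.left_notMem, h.right_notMem]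
  have hcycle := isAltCycle_toFinset_edges hc hM ⟨2, rfl⟩
  rwa [hedges] at hcycle

theorem sum_squareEdges (h : IsAltSquare G M a b a' b') (f : Sym2 V → ℤ) :
    ∑ e ∈ squareEdges a b a' b', f e = f s(a, a') + f s(a', b') + f s(b, b') + f s(a, b) := by
  rw [squareEdges, List.sum_toFinset f h.edges_nodup]
  simp [add_assoc]

theorem wSum_of_blue (h : IsAltSquare G M a b a' b') (hab : red s(a, b) = false)
    (hab' : red s(a', b') = false) (hred : red s(a, a') = true ∨ red s(b, b') = true) :
    0 < wSum red M (squareEdges a b a' b') ∧ wSum red M (squareEdges a b a' b') ≤ 2 ∧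
      (redCount red (squareEdges a b a' b') : ℤ) = wSum red M (squareEdges a b a' b') := by
  rw [wSum, redCount, card_filter]
  push_cast
  rw [h.sum_squareEdges, h.sum_squareEdges]
  have := h.left_notMem
  have := h.right_notMem
  cases hl : red s(a, a') <;> cases hr : red s(b, b') <;> simp_all [wt]

theorem wSum_of_red (h : IsAltSquare G M a b a' b') (hab : red s(a, b) = true)
    (hab' : red s(a', b') = true) (hblue : red s(a, a') = false ∨ red s(b, b') = false) :
    -2 ≤ wSum red M (squareEdges a b a' b') ∧ wSum red M (squareEdges a b a' b') < 0 ∧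
      (blueCount red (squareEdges a b a' b') : ℤ) = |wSum red M (squareEdges a b a' b')| := by
  rw [wSum, blueCount, card_filter]
  push_cast
  rw [h.sum_squareEdges, h.sum_squareEdges]
  have := h.mem
  have := h.mem'
  have := h.left_notMem
  have := h.right_notMem
  cases hl : red s(a, a') <;> cases hr : red s(b, b') <;> simp_all [wt]

end IsAltSquare

end AltSquare

section Ladder

variable {V : Type*} {G : SimpleGraph V} {M C : Finset (Sym2 V)}
  {red : Sym2 V → Bool} {col : Bool} {u v : V} {p : G.Walk u v}

theorem exists_orderEmbedding_pairwise_isAltSquare {t : ℕ} (hG : G.IndepSetFree t)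
    (hM : IsMatchingEdgeSet M) (hp : p.IsPath) (hpM : MatchedAtOdd M p.edges) (s : ℕ)
    (hlen : 2 * ramsey (ramsey s t) t ≤ p.length) :
    ∃ φ : Fin s ↪o Fin (ramsey (ramsey s t) t), Pairwise fun i j =>
      IsAltSquare G M (p.getVert (2 * φ i + 1)) (p.getVert (2 * φ i + 2))
        (p.getVert (2 * φ j + 1)) (p.getVert (2 * φ j + 2)) := by
  set R := ramsey (ramsey s t) t
  have hinj {x y : ℕ} (hx : x ≤ p.length) (hy : y ≤ p.length) :
      p.getVert x = p.getVert y ↔ x = y := hp.getVert_injOn.eq_iff hx hy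
  let f : Fin R ↪ V := ⟨fun x => p.getVert (2 * x + 1), fun x y h =>
    Fin.ext (by have := (hinj (by omega) (by omega)).mp h; omega)⟩
  let g : Fin R ↪ V := ⟨fun x => p.getVert (2 * x + 2), fun x y h =>
    Fin.ext (by have := (hinj (by omega) (by omega)).mp h; omega)⟩
  have hmem (x : Fin R) : s(f x, g x) ∈ M :=
    (hpM.getVert_mem_iff (by omega)).mpr ⟨x, rfl⟩
  have hne (x y : Fin R) : f x ≠ g y := fun h => by
    have := (hinj (by omega) (by omega)).mp h; omega
  obtain ⟨φ, hφ⟩ := exists_orderEmbedding_pairwise_adj₂ hG s f g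
  refine ⟨φ, fun i j hij => ⟨p.adj_getVert_succ (by omega), p.adj_getVert_succ (by omega),
    (hφ hij).1, (hφ hij).2, hne _ _, (hne _ _).symm, hmem _, hmem _, ?_, ?_⟩⟩
  · exact fun h => hne _ _ (hM (hmem (φ i)) h).symm
  · exact fun h => hne _ _ (hM (Sym2.eq_swap ▸ hmem (φ i)) h)

variable [DecidableEq V]

theorem exists_zeroSkip_of_isAltSquare (hC : IsAltCycle G M C) (hp : p.IsPath)
    (hpC : p.edges.toFinset ⊆ C) (hpM : MatchedAtOdd M p.edges) (hcol : ∀ e ∈ p.edges, red e = col)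
    {i j k : ℕ} (hij : i < j) (hjk : j < k) (hik : i + 2 < k) (hk : 2 * k + 1 < p.length)
    (hsq : IsAltSquare G M (p.getVert (2 * i + 1)) (p.getVert (2 * i + 2))
      (p.getVert (2 * j + 1)) (p.getVert (2 * j + 2)))
    (hsq' : IsAltSquare G M (p.getVert (2 * j + 1)) (p.getVert (2 * j + 2))
      (p.getVert (2 * k + 1)) (p.getVert (2 * k + 2)))
    (hright : red s(p.getVert (2 * i + 2), p.getVert (2 * j + 2)) = col)
    (hleft : red s(p.getVert (2 * j + 1), p.getVert (2 * k + 1)) = col) :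
    ∃ S : Skip G red M C, S.w = 0 ∧ S.In p.edges.toFinset := by
  obtain ⟨q, hq, hqlen, hqedges, hqvert⟩ :=
    exists_walk_between hp (i := 2 * i + 2) (j := 2 * k + 1) (by omega) (by omega)
  have hqsub : q.edges ⊆ p.edges := by
    rw [hqedges]
    exact ((List.take_sublist _ _).trans (List.drop_sublist _ _)).subset
  have hqsub' : q.edges.toFinset ⊆ p.edges.toFinset := fun e => by simpa using @hqsub e
  have hmono : IsOddMonoPath red M col q :=
    { isPath := hq
      matchedAtOdd := hqedges ▸ hpM.take_drop ⟨i + 1, by omega⟩ _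
      odd_length := ⟨k - i - 1, by omega⟩
      red_eq := fun e he => hcol e (hqsub he) }
  have hj : q.getVert (2 * (j - i - 1) + 1) = p.getVert (2 * j + 1) := by
    rw [hqvert _ (by omega)]; congr 1; omega
  have hj' : q.getVert (2 * (j - i - 1) + 1 + 1) = p.getVert (2 * j + 2) := by
    rw [hqvert _ (by omega)]; congr 1; omega
  obtain ⟨S, hw, hS⟩ := exists_zeroSkip_of_chords hC hmono (hqsub'.trans hpC) (by omega)
    (k := 2 * (j - i - 1) + 1) ⟨_, rfl⟩ (by omega)
    (hj' ▸ hsq.adj_right) (hj ▸ hsq'.adj_left) (hj' ▸ hsq.right_notMem) (hj ▸ hsq'.left_notMem)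
    (hj' ▸ hright) (hj ▸ hleft)
  exact ⟨S, hw, hS.trans hqsub'⟩

theorem exists_isAltSquare_of_not_exists_zeroSkip {t : ℕ} (hG : G.IndepSetFree t)
    (hM : IsMatchingEdgeSet M) (hC : IsAltCycle G M C) (hp : p.IsPath)
    (hpC : p.edges.toFinset ⊆ C) (hpM : MatchedAtOdd M p.edges) (hcol : ∀ e ∈ p.edges, red e = col)
    (hlen : 2 * ramsey (ramsey 4 t) t ≤ p.length)
    (hnoskip : ¬ ∃ S : Skip G red M C, S.w = 0 ∧ S.In p.edges.toFinset) :
    ∃ a b a' b', IsAltSquare G M a b a' b' ∧ s(a, b) ∈ p.edges ∧ s(a', b') ∈ p.edges ∧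
      (red s(a, a') = !col ∨ red s(b, b') = !col) := by
  obtain ⟨φ, hφ⟩ := exists_orderEmbedding_pairwise_isAltSquare hG hM hp hpM 4 hlen
  have hmem (i : Fin 4) : s(p.getVert (2 * φ i + 1), p.getVert (2 * φ i + 2)) ∈ p.edges :=
    p.mk_mem_edges_iff_exists.mpr ⟨2 * φ i + 1, by omega, rfl⟩
  by_contra! hmono
  simp only [Bool.not_eq_not, ne_eq] at hmono
  have h01 : φ 0 < φ 1 := φ.strictMono (by decide)
  have h12 : φ 1 < φ 2 := φ.strictMono (by decide)
  have h23 : φ 2 < φ 3 := φ.strictMono (by decide)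
  have hsq := hφ (show (0 : Fin 4) ≠ 1 by decide)
  have hsq' := hφ (show (1 : Fin 4) ≠ 3 by decide)
  exact hnoskip <| exists_zeroSkip_of_isAltSquare hC hp hpC hpM hcol h01 (h12.trans h23)
    (by omega) (by omega) hsq hsq' (hmono _ _ _ _ hsq (hmem 0) (hmem 1)).2
    (hmono _ _ _ _ hsq' (hmem 1) (hmem 3)).1

/-- The form of the conclusion for either colour: two edges, at least one of colour `col`, with
endpoints covered by `l` close up with parts of `C` to an `M`-alternating cycle satisfying `Q`. -/
def HasChordCycle (G : SimpleGraph V) (red : Sym2 V → Bool) (M C : Finset (Sym2 V))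
    (l : List (Sym2 V)) (col : Bool) (Q : Finset (Sym2 V) → Prop) : Prop :=
  ∃ (e₁ e₂ : Sym2 V) (C' : Finset (Sym2 V)),
    e₁ ∈ G.edgeSet ∧ e₂ ∈ G.edgeSet ∧ e₁ ≠ e₂ ∧
    (∀ a : V, a ∈ e₁ → ∃ f ∈ l, a ∈ f) ∧ (∀ a : V, a ∈ e₂ → ∃ f ∈ l, a ∈ f) ∧
    (red e₁ = col ∨ red e₂ = col) ∧
    IsAltCycle G M C' ∧ e₁ ∈ C' ∧ e₂ ∈ C' ∧ C' \ {e₁, e₂} ⊆ C ∧ Q C'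

theorem IsAltSquare.hasChordCycle {a b a' b' : V} {l : List (Sym2 V)} {Q : Finset (Sym2 V) → Prop}
    (h : IsAltSquare G M a b a' b') (hl : l.toFinset ⊆ C)
    (hab : s(a, b) ∈ l) (hab' : s(a', b') ∈ l) (hcol : red s(a, a') = col ∨ red s(b, b') = col)
    (hQ : Q (squareEdges a b a' b')) : HasChordCycle G red M C l col Q := by
  have hne : s(a, a') ≠ s(b, b') := by
    have := h.edges_nodup
    simp_all
  refine ⟨s(a, a'), s(b, b'), squareEdges a b a' b', h.adj_left, h.adj_right, hne, ?_, ?_, hcol,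
    h.isAltCycle, by simp [squareEdges], by simp [squareEdges], ?_, hQ⟩
  · simpa using ⟨⟨_, hab, by simp⟩, ⟨_, hab', by simp⟩⟩
  · simpa using ⟨⟨_, hab, by simp⟩, ⟨_, hab', by simp⟩⟩
  · have := hl (List.mem_toFinset.mpr hab)
    have := hl (List.mem_toFinset.mpr hab')
    intro e he
    simp only [squareEdges, mem_sdiff, List.mem_toFinset, List.mem_cons, mem_insert,
      mem_singleton, List.not_mem_nil] at he
    grind

theorem skip_or_small_cycle_general {t : ℕ} (hG : G.IndepSetFree t) (hM : IsMatchingEdgeSet M)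
    (hC : IsAltCycle G M C) (hp : p.IsPath) (halt : altList M p.edges)
    (hpC : p.edges.toFinset ⊆ C) (hlen : 2 * ramsey (ramsey 4 t) t ≤ p.length)
    (hstart : ∀ e : Sym2 V, p.edges.head? = some e → e ∉ M)
    (hnoskip : ¬ ∃ S : Skip G red M C, S.w = 0 ∧ S.In p.edges.toFinset) :
    ((∀ e ∈ p.edges, red e = false) → HasChordCycle G red M C p.edges true fun D =>
      0 < wSum red M D ∧ wSum red M D ≤ 2 ∧ (redCount red D : ℤ) = wSum red M D) ∧
    ((∀ e ∈ p.edges, red e = true) → HasChordCycle G red M C p.edges false fun D =>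
      -2 ≤ wSum red M D ∧ wSum red M D < 0 ∧ (blueCount red D : ℤ) = |wSum red M D|) := by
  have hpM : MatchedAtOdd M p.edges := matchedAtOdd_iff_altList.mpr ⟨halt, hstart⟩
  refine ⟨fun hblue => ?_, fun hred => ?_⟩
  · obtain ⟨a, b, a', b', hsq, hab, hab', hchord⟩ :=
      exists_isAltSquare_of_not_exists_zeroSkip hG hM hC hp hpC hpM hblue hlen hnoskip
    exact hsq.hasChordCycle hpC hab hab' hchord
      (hsq.wSum_of_blue (hblue _ hab) (hblue _ hab') hchord)
  · obtain ⟨a, b, a', b', hsq, hab, hab', hchord⟩ :=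
      exists_isAltSquare_of_not_exists_zeroSkip hG hM hC hp hpC hpM hred hlen hnoskip
    exact hsq.hasChordCycle hpC hab hab' hchord
      (hsq.wSum_of_red (hred _ hab) (hred _ hab') hchord)

end Ladder

/-- Lemma "skip or cycle": let `C` be an `M`-alternating cycle and `P ⊆ C` a monochromatic
`M`-alternating path of length at least `6·R(R(4,α+1),α+1)` starting with a non-matching
edge and containing no 0-skip. If `P` is blue, there are two chords `e1, e2` with endpoints
on `P`, at least one red, closing up with parts of `C` into an `M`-alternating cycle `C'`
with `0 < w_M(C') ≤ 2` whose number of red edges equals `w_M(C')`; if `P` is red, the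
symmetric conclusion holds. -/
theorem skip_or_small_cycle
    {V : Type*} [Fintype V] [DecidableEq V] (G : SimpleGraph V) (red : Sym2 V → Bool)
    (M C : Finset (Sym2 V)) (hM : IsPM G M) (hC : IsAltCycle G M C)
    (u v : V) (p : G.Walk u v) (hpath : p.IsPath) (halt : altList M p.edges)
    (hPC : p.edges.toFinset ⊆ C)
    (hlen : 6 * ramsey (ramsey 4 (indepNum G + 1)) (indepNum G + 1) ≤ p.length)
    (hstart : ∀ e : Sym2 V, p.edges.head? = some e → e ∉ M)
    (hnoskip : ¬ ∃ S : Skip G red M C, S.w = 0 ∧ S.In p.edges.toFinset) :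
    ((∀ e ∈ p.edges, red e = false) →
      ∃ (e1 e2 : Sym2 V) (C' : Finset (Sym2 V)),
        e1 ∈ G.edgeSet ∧ e2 ∈ G.edgeSet ∧ e1 ≠ e2 ∧
        (∀ a : V, a ∈ e1 → ∃ f ∈ p.edges, a ∈ f) ∧
        (∀ a : V, a ∈ e2 → ∃ f ∈ p.edges, a ∈ f) ∧
        (red e1 = true ∨ red e2 = true) ∧
        IsAltCycle G M C' ∧ e1 ∈ C' ∧ e2 ∈ C' ∧ C' \ {e1, e2} ⊆ C ∧
        0 < wSum red M C' ∧ wSum red M C' ≤ 2 ∧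
        (redCount red C' : ℤ) = wSum red M C') ∧
    ((∀ e ∈ p.edges, red e = true) →
      ∃ (e1 e2 : Sym2 V) (C' : Finset (Sym2 V)),
        e1 ∈ G.edgeSet ∧ e2 ∈ G.edgeSet ∧ e1 ≠ e2 ∧
        (∀ a : V, a ∈ e1 → ∃ f ∈ p.edges, a ∈ f) ∧
        (∀ a : V, a ∈ e2 → ∃ f ∈ p.edges, a ∈ f) ∧
        (red e1 = false ∨ red e2 = false) ∧
        IsAltCycle G M C' ∧ e1 ∈ C' ∧ e2 ∈ C' ∧ C' \ {e1, e2} ⊆ C ∧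
        -2 ≤ wSum red M C' ∧ wSum red M C' < 0 ∧
        (blueCount red C' : ℤ) = |wSum red M C'|) :=
  skip_or_small_cycle_general indepSetFree_indepNum_add_one hM.isMatchingEdgeSet hC hpath halt hPC
    (by omega) hstart hnoskip
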